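/- Let C be a triangulated category with a weight structure w, let B be a set of objects of C_{[0,1]}, let 𝔻 be the triangulated subcategory of C generated by B, and let w_{C/𝔻} be the weight structure on C/𝔻 whose classes are the retract-closures in C/𝔻 of C_{w≤0} and C_{w≥0}. Then the heart of w_{C/𝔻} is the Karoubi-closure in C/𝔻 of the full subcategory H of C/𝔻 whose objects are those of C_{w=0}; that is, every object of (C/𝔻)_{w_{C/𝔻}=0} is a retract in C/𝔻 of an object of C_{w=0}, and every object of C_{w=0} lies in (C/𝔻)_{w_{C/𝔻}=0}. -/

import Mathlib

open CategoryTheory Limits Pretriangulated ZeroObject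

universe v u v' u'

section TriangulatedPrelude

variable {C : Type u} [Category.{v} C] [HasZeroObject C] [HasShift C ℤ] [Preadditive C]
  [∀ n : ℤ, (shiftFunctor C n).Additive] [Pretriangulated C]

/-- The objects of the smallest strict full triangulated subcategory of `C`
containing the set of objects `B`. -/
inductive genSub (B : Set C) : C → Prop
  | of (X : C) (hX : X ∈ B) : genSub B X
  | zero (X : C) (hX : IsZero X) : genSub B X
  | shift (X : C) (n : ℤ) (hX : genSub B X) : genSub B (X⟦n⟧)
  | ext₂ (T : Triangle C) (hT : T ∈ distTriang C) (h₁ : genSub B T.obj₁)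
      (h₃ : genSub B T.obj₃) : genSub B T.obj₂

/-- The triangulated subcategory of `C` generated by `B`. -/
def genSubcat (B : Set C) : ObjectProperty C :=
  genSub B

instance genSubcat_isTriangulated (B : Set C) : (genSubcat B).IsTriangulated where
  exists_zero := ⟨0, isZero_zero _, genSub.zero _ (isZero_zero _)⟩
  isStableUnderShiftBy n := ⟨fun X h => genSub.shift X n h⟩
  ext₂' T hT h₁ h₃ := ObjectProperty.le_isoClosure _ _ (genSub.ext₂ T hT h₁ h₃)

/-- The extension-closure of a class of objects `E`: the smallest class containing `E`
and `0` and such that for any distinguished triangle `X ⟶ Y ⟶ Z` with `X, Z` in the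
class, `Y` is also in the class. -/
inductive extClosure (E : Set C) : C → Prop
  | of (X : C) (hX : X ∈ E) : extClosure E X
  | zero (X : C) (hX : IsZero X) : extClosure E X
  | ext₂ (T : Triangle C) (hT : T ∈ distTriang C) (h₁ : extClosure E T.obj₁)
      (h₃ : extClosure E T.obj₃) : extClosure E T.obj₂

/-- `D_{[i,j]}`: the extension-closure of `∪_{i ≤ l ≤ j} D[l]`. -/
def shiftClosure (D : Set C) (i j : ℤ) : Set C :=
  extClosure {X | ∃ (Y : C) (l : ℤ), i ≤ l ∧ l ≤ j ∧ Y ∈ D ∧ X = Y⟦l⟧}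

/-- `D_{≥ i} = ∪_{k ≥ i} D_{[i,k]}`. -/
def shiftClosureGE (D : Set C) (i : ℤ) : Set C := {X | ∃ k, i ≤ k ∧ X ∈ shiftClosure D i k}

/-- `D_{≤ j} = ∪_{k ≤ j} D_{[k,j]}`. -/
def shiftClosureLE (D : Set C) (j : ℤ) : Set C := {X | ∃ k, k ≤ j ∧ X ∈ shiftClosure D k j}

/-- A set of objects `D` is weakly negative if `0 ∈ D` and `Hom(X, Y[i]) = 0`
for all `X, Y ∈ D` and all `i ≥ 2`. -/
def WeaklyNegative (D : Set C) : Prop :=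
  (0 : C) ∈ D ∧ ∀ X ∈ D, ∀ Y ∈ D, ∀ i : ℤ, 2 ≤ i → ∀ f : X ⟶ (Y⟦i⟧), f = 0

end TriangulatedPrelude

section WeightStructurePrelude

variable (C : Type u) [Category.{v} C] [HasZeroObject C] [HasShift C ℤ] [Preadditive C]
  [∀ n : ℤ, (shiftFunctor C n).Additive] [Pretriangulated C]

/-- A weight structure on a (pre)triangulated category `C` (homological convention):
two retract-closed classes of objects `LE = C_{w≤0}` and `GE = C_{w≥0}` such that
`C_{w≤0} ⊆ C_{w≤0}[1]`, `C_{w≥0}[1] ⊆ C_{w≥0}`, `Hom(C_{w≤0}, C_{w≥0}[1]) = 0`, and every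
object `M` admits a weight decomposition `X ⟶ M ⟶ Y ⟶ X[1]` with `X ∈ C_{w≤0}`,
`Y ∈ C_{w≥0}[1]`. -/
structure WeightStructure where
  /-- the class `C_{w≤0}` -/
  LE : Set C
  /-- the class `C_{w≥0}` -/
  GE : Set C
  retract_LE : ∀ ⦃X Y : C⦄, Y ∈ LE → ∀ (i : X ⟶ Y) (r : Y ⟶ X), i ≫ r = 𝟙 X → X ∈ LE
  retract_GE : ∀ ⦃X Y : C⦄, Y ∈ GE → ∀ (i : X ⟶ Y) (r : Y ⟶ X), i ≫ r = 𝟙 X → X ∈ GE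
  shift_LE : ∀ X ∈ LE, X⟦(-1 : ℤ)⟧ ∈ LE
  shift_GE : ∀ X ∈ GE, X⟦(1 : ℤ)⟧ ∈ GE
  orthogonality : ∀ X ∈ LE, ∀ Y ∈ GE, ∀ f : X ⟶ (Y⟦(1 : ℤ)⟧), f = 0
  decomposition : ∀ M : C, ∃ (X Y : C) (a : X ⟶ M) (b : M ⟶ Y) (c : Y ⟶ X⟦(1 : ℤ)⟧),
    (Triangle.mk a b c ∈ distTriang C) ∧ X ∈ LE ∧ Y⟦(-1 : ℤ)⟧ ∈ GE

variable {C}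

/-- The class `C_{w=0} = C_{w≤0} ∩ C_{w≥0}` of objects of the heart. -/
def WeightStructure.heart (w : WeightStructure C) : Set C := w.LE ∩ w.GE

/-- The class `C_{[0,1]} = C_{w≥0} ∩ C_{w≤1}`. -/
def WeightStructure.zeroOne (w : WeightStructure C) : Set C :=
  {X | X ∈ w.GE ∧ X⟦(-1 : ℤ)⟧ ∈ w.LE}

end WeightStructurePrelude

/-!
Write `P ⋆ Q` for the class of extensions of objects of `Q` by objects of `P`
(`extensionProduct P Q`); this operation is associative. By orthogonality an extension of an
object of `C_{w≤0}` by one of `C_{w≥0}` splits, so `C_{w≥0} ⋆ C_{w≤0} ⊆ C_{w≤0} ⋆ C_{w≥0}`. Hence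
`(C_{w≤0} ∩ 𝔻) ⋆ C_{w≥0}` is closed under extensions; it contains every shift of every object of
`B ⊆ C_{[0,1]}`, and therefore all of `𝔻`. By the same computation it contains
`C_{w≥0} ⋆ 𝔻`: if the cone of `Y ⟶ Z` lies in `𝔻` and `Y ∈ C_{w≥0}`, then `Z` is isomorphic in `C/𝔻`
to an object of `C_{w≥0}`. So each morphism of `C/𝔻` from `C_{w≤0}` to `C_{w≥0}` is, up to such an
isomorphism of its target, a morphism of `C` from `C_{w≤0}` to `C_{w≥0}`, and these factor
through `C_{w=0}`. An object of the heart of `C/𝔻` is a retract of both an object of `C_{w≤0}` and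
an object of `C_{w≥0}`; its identity thus factors through an object of `C_{w=0}`.
-/

section Development

open ObjectProperty

variable {C : Type u} [Category.{v} C]

lemma retractClosure_map_iff {D : Type u'} [Category.{v'} D] (P : ObjectProperty C) (L : C ⥤ D)
    (X : D) :
    (P.map L).retractClosure X ↔
      ∃ Y, P Y ∧ ∃ (i : X ⟶ L.obj Y) (r : L.obj Y ⟶ X), i ≫ r = 𝟙 X := by
  constructor
  · rintro ⟨_, ⟨Y, hY, ⟨e⟩⟩, ⟨ρ⟩⟩
    exact ⟨Y, hY, ρ.i ≫ e.inv, e.hom ≫ ρ.r, by simp⟩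
  · rintro ⟨Y, hY, i, r, h⟩
    exact ⟨L.obj Y, P.prop_map_obj L hY, ⟨⟨i, r, h⟩⟩⟩

variable [HasZeroObject C] [HasShift C ℤ] [Preadditive C]
  [∀ n : ℤ, (shiftFunctor C n).Additive] [Pretriangulated C]

section Extensions

variable (P Q : ObjectProperty C)

instance isTriangulatedClosed₂_shift [P.IsClosedUnderIsomorphisms] [P.IsTriangulatedClosed₂]
    (n : ℤ) : (P.shift n).IsTriangulatedClosed₂ :=
  .mk' fun T hT h₁ h₃ =>
    P.ext_of_isTriangulatedClosed₂ _ (Triangle.shift_distinguished T hT n) h₁ h₃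

lemma extensionProduct_le_swap_of_hom_shift_eq_zero
    (h : ∀ ⦃X Y : C⦄, P X → Q Y → ∀ f : Y ⟶ X⟦(1 : ℤ)⟧, f = 0) :
    extensionProduct P Q ≤ extensionProduct Q P := by
  rintro M ⟨X, Y, f, g, δ, hT, hX, hY⟩
  obtain ⟨e, -⟩ := exists_iso_binaryBiproduct_of_distTriang _ hT (h hX hY δ)
  exact prop_of_iso _ ((biprod.braiding Y X).trans e.symm)
    ⟨Y, X, _, _, _, binaryBiproductTriangle_distinguished Y X, hY, hX⟩

variable [IsTriangulated C]

lemma isTriangulatedClosed₂_extensionProduct [P.IsTriangulatedClosed₂] [Q.IsTriangulatedClosed₂]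
    (h : extensionProduct Q P ≤ extensionProduct P Q) :
    (extensionProduct P Q).IsTriangulatedClosed₂ := by
  have key : extensionProduct (extensionProduct P Q) (extensionProduct P Q) ≤
      extensionProduct P Q := calc
    _ = extensionProduct P (extensionProduct (extensionProduct Q P) Q) := by
      simp only [extensionProduct_assoc]
    _ ≤ extensionProduct P (extensionProduct (extensionProduct P Q) Q) :=
      monotone_extensionProduct_right _ (monotone_extensionProduct_left _ h)
    _ = extensionProduct (extensionProduct P P) (extensionProduct Q Q) := by
      simp only [extensionProduct_assoc]
    _ ≤ extensionProduct P.isoClosure (extensionProduct Q Q) :=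
      monotone_extensionProduct_left _
        (extensionProduct_le_of_isTriangulatedClosed₂' le_rfl le_rfl)
    _ ≤ extensionProduct P.isoClosure Q.isoClosure :=
      monotone_extensionProduct_right _
        (extensionProduct_le_of_isTriangulatedClosed₂' le_rfl le_rfl)
    _ = extensionProduct P Q := by
      rw [extensionProduct_isoClosure_left, extensionProduct_isoClosure_right]
  exact .mk' fun T hT h₁ h₃ => key _ ⟨_, _, _, _, _, hT, h₁, h₃⟩

end Extensions

namespace WeightStructure

variable (w : WeightStructure C)

/-- The class `C_{w≤0}` as a property of objects, so that orthogonals, shifts and extension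
products of object properties apply to it. -/
def le : ObjectProperty C := fun X => X ∈ w.LE

/-- The class `C_{w≥0}` as a property of objects, so that orthogonals, shifts and extension
products of object properties apply to it. -/
def ge : ObjectProperty C := fun X => X ∈ w.GE

instance isStableUnderRetracts_le : w.le.IsStableUnderRetracts where
  of_retract ρ hY := w.retract_LE hY ρ.i ρ.r ρ.retract

instance isStableUnderRetracts_ge : w.ge.IsStableUnderRetracts where
  of_retract ρ hY := w.retract_GE hY ρ.i ρ.r ρ.retract

lemma le_eq_leftOrthogonal : w.le = (w.ge.shift (-1 : ℤ)).leftOrthogonal := by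
  ext M
  constructor
  · intro hM Y f hY
    exact zero_of_comp_mono (shiftNegShift Y (1 : ℤ)).inv (w.orthogonality M hM _ hY _)
  · intro hM
    obtain ⟨X, Y, a, b, c, hT, hX, hY⟩ := w.decomposition M
    obtain ⟨s, hs⟩ := Triangle.coyoneda_exact₂ _ hT (𝟙 M) (hM _ hY)
    exact w.retract_LE hX s a hs.symm

lemma ge_eq_rightOrthogonal_shift : w.ge = w.le.rightOrthogonal.shift (1 : ℤ) := by
  ext M
  constructor
  · exact fun hM X f hX => w.orthogonality X hX M hM f
  · intro hM
    obtain ⟨X, Y, a, b, c, hT, hX, hY⟩ := w.decomposition (M⟦(1 : ℤ)⟧)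
    obtain ⟨r, hr⟩ := Triangle.yoneda_exact₂ _ hT (𝟙 (M⟦(1 : ℤ)⟧)) (hM _ hX)
    let ρ : Retract (M⟦(1 : ℤ)⟧) Y := ⟨b, r, hr.symm⟩
    exact w.ge.prop_of_iso (shiftShiftNeg M (1 : ℤ))
      (w.ge.prop_of_retract (ρ.map (shiftFunctor C (-1 : ℤ))) hY)

instance isTriangulatedClosed₂_le : w.le.IsTriangulatedClosed₂ := by
  rw [le_eq_leftOrthogonal]
  infer_instance

instance isTriangulatedClosed₂_ge : w.ge.IsTriangulatedClosed₂ := by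
  rw [ge_eq_rightOrthogonal_shift]
  infer_instance

instance containsZero_le : w.le.ContainsZero := by
  rw [le_eq_leftOrthogonal]
  infer_instance

instance containsZero_ge : w.ge.ContainsZero := by
  obtain ⟨_, _, _, _, _, -, -, hY⟩ := w.decomposition 0
  have := nonempty_of_prop (P := w.ge) hY
  infer_instance

lemma extensionProduct_ge_le_swap {P : ObjectProperty C} (hP : P ≤ w.le) :
    extensionProduct w.ge P ≤ extensionProduct P w.ge :=
  extensionProduct_le_swap_of_hom_shift_eq_zero _ _
    fun X Y hX hY f => w.orthogonality Y (hP Y hY) X hX f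

lemma exists_factorization_through_heart {X Y : C} (hX : w.le X) (hY : w.ge Y) (f : X ⟶ Y) :
    ∃ H, (w.le ⊓ w.ge) H ∧ ∃ (a : X ⟶ H) (b : H ⟶ Y), a ≫ b = f := by
  obtain ⟨H, Z, b, p, δ, hT, hH, hZ⟩ := w.decomposition Y
  rw [le_eq_leftOrthogonal] at hX
  obtain ⟨a, ha⟩ := Triangle.coyoneda_exact₂ _ hT f (hX _ hZ)
  have hH' : w.ge H := w.ge.ext_of_isTriangulatedClosed₂ _ (inv_rot_of_distTriang _ hT) hZ hY
  exact ⟨H, ⟨hH, hH'⟩, a, b, ha.symm⟩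

lemma ge_shift_of_nonneg {X : C} (hX : w.ge X) {n : ℤ} (hn : 0 ≤ n) : w.ge (X⟦n⟧) := by
  induction n, hn using Int.leInduction with
  | base => exact w.ge.prop_of_iso ((shiftFunctorZero C ℤ).symm.app X) hX
  | succ n _ ih => exact w.ge.prop_of_iso ((shiftFunctorAdd C n 1).symm.app X) (w.shift_GE _ ih)

lemma le_shift_of_nonpos {X : C} (hX : w.le X) {n : ℤ} (hn : n ≤ 0) : w.le (X⟦n⟧) := by
  induction n, hn using Int.leInductionDown with
  | base => exact w.le.prop_of_iso ((shiftFunctorZero C ℤ).symm.app X) hX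
  | pred n _ ih =>
    exact w.le.prop_of_iso ((shiftFunctorAdd C n (-1)).symm.app X) (w.shift_LE _ ih)

section Quotient

variable [IsTriangulated C] {P : ObjectProperty C}

lemma extensionProduct_ge_le_of_decomposable (hP : P ≤ extensionProduct (w.le ⊓ P) w.ge) :
    extensionProduct w.ge P ≤ extensionProduct (w.le ⊓ P) w.ge := calc
  _ ≤ extensionProduct w.ge (extensionProduct (w.le ⊓ P) w.ge) :=
    monotone_extensionProduct_right _ hP
  _ = extensionProduct (extensionProduct w.ge (w.le ⊓ P)) w.ge :=
    (extensionProduct_assoc _ _ _).symm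
  _ ≤ extensionProduct (extensionProduct (w.le ⊓ P) w.ge) w.ge :=
    monotone_extensionProduct_left _ (w.extensionProduct_ge_le_swap inf_le_left)
  _ = extensionProduct (w.le ⊓ P) (extensionProduct w.ge w.ge) := extensionProduct_assoc _ _ _
  _ ≤ extensionProduct (w.le ⊓ P) w.ge :=
    monotone_extensionProduct_right _ (extensionProduct_le_of_isTriangulatedClosed₂ le_rfl le_rfl)

lemma exists_trW_to_ge [P.IsStableUnderShift ℤ] (hP : P ≤ extensionProduct (w.le ⊓ P) w.ge)
    {Y Z : C} (hY : w.ge Y) {s : Y ⟶ Z} (hs : P.trW s) :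
    ∃ (Z' : C) (t : Z ⟶ Z'), P.trW t ∧ w.ge Z' := by
  obtain ⟨D, p, δ, hT, hD⟩ := hs
  obtain ⟨X, Z', a, t, c, hT', ⟨-, hX⟩, hZ'⟩ :=
    w.extensionProduct_ge_le_of_decomposable hP Z ⟨Y, D, s, p, δ, hT, hY, hD⟩
  exact ⟨Z', t, .mk' P hT' hX, hZ'⟩

variable [P.IsTriangulated] {D : Type u'} [Category.{v'} D] (L : C ⥤ D) [L.IsLocalization P.trW]

lemma exists_leftFraction_to_ge (hP : P ≤ extensionProduct (w.le ⊓ P) w.ge) {X Y : C}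
    (hY : w.ge Y) (f : L.obj X ⟶ L.obj Y) :
    ∃ (Z : C) (g : X ⟶ Z) (s : Y ⟶ Z), w.ge Z ∧ P.trW s ∧ f ≫ L.map s = L.map g := by
  obtain ⟨φ, rfl⟩ := Localization.exists_leftFraction L P.trW f
  obtain ⟨Z, t, ht, hZ⟩ := w.exists_trW_to_ge hP hY φ.hs
  refine ⟨Z, φ.f ≫ t, φ.s ≫ t, hZ, P.trW.comp_mem _ _ φ.hs ht, ?_⟩
  rw [L.map_comp, L.map_comp, φ.map_comp_map_s_assoc]

lemma exists_localization_factorization_through_heart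
    (hP : P ≤ extensionProduct (w.le ⊓ P) w.ge) {X Y : C} (hX : w.le X) (hY : w.ge Y)
    (f : L.obj X ⟶ L.obj Y) :
    ∃ H, (w.le ⊓ w.ge) H ∧ ∃ (a : L.obj X ⟶ L.obj H) (b : L.obj H ⟶ L.obj Y), a ≫ b = f := by
  obtain ⟨Z, g, s, hZ, hs, hfs⟩ := w.exists_leftFraction_to_ge L hP hY f
  obtain ⟨H, hH, a, b, rfl⟩ := w.exists_factorization_through_heart hX hZ g
  have : IsIso (L.map s) := Localization.inverts L P.trW s hs
  refine ⟨H, hH, L.map a, L.map b ≫ inv (L.map s), ?_⟩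
  rw [← Category.assoc, ← L.map_comp, ← hfs, Category.assoc, IsIso.hom_inv_id, Category.comp_id]

end Quotient

section GeneratedSubcategory

variable [IsTriangulated C] {B : Set C}

lemma genSubcat_le_extensionProduct (hB : B ⊆ w.zeroOne) :
    genSubcat B ≤ extensionProduct (w.le ⊓ genSubcat B) w.ge := by
  have : (extensionProduct (w.le ⊓ genSubcat B) w.ge).IsTriangulatedClosed₂ :=
    isTriangulatedClosed₂_extensionProduct _ _ (w.extensionProduct_ge_le_swap inf_le_left)
  suffices ∀ M, genSubcat B M → ∀ n : ℤ, extensionProduct (w.le ⊓ genSubcat B) w.ge (M⟦n⟧) from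
    fun M hM => prop_of_iso _ ((shiftFunctorZero C ℤ).app M) (this M hM 0)
  intro M hM
  induction hM with
  | of X hX =>
    obtain ⟨hX₀, hX₁⟩ := hB hX
    intro n
    rcases le_or_gt 0 n with hn | hn
    · exact le_extensionProduct_right _ _ (w.ge_shift_of_nonneg hX₀ hn)
    · have hXn : w.le (X⟦n⟧) :=
        w.le.prop_of_iso ((shiftFunctorAdd' C (-1) (n + 1) n (by lia)).symm.app X)
          (w.le_shift_of_nonpos hX₁ (by lia))
      exact le_extensionProduct_left _ _ ⟨hXn, .shift X n (.of X hX)⟩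
  | zero X hX =>
    exact fun n => le_extensionProduct_right _ _
      (w.ge.prop_of_isZero ((shiftFunctor C n).map_isZero hX))
  | shift X m _ ih => exact fun n => prop_of_iso _ ((shiftFunctorAdd C m n).app X) (ih (m + n))
  | ext₂ T hT _ _ ih₁ ih₃ =>
    exact fun n => ext_of_isTriangulatedClosed₂ _ _
      (Triangle.shift_distinguished T hT n) (ih₁ n) (ih₃ n)

end GeneratedSubcategory

end WeightStructure

theorem statement18_general [IsTriangulated C] (w : WeightStructure C) {P : ObjectProperty C}
    [P.IsTriangulated] (hP : P ≤ extensionProduct (w.le ⊓ P) w.ge)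
    {D : Type u'} [Category.{v'} D] (L : C ⥤ D) [L.IsLocalization P.trW] :
    (w.le.map L).retractClosure ⊓ (w.ge.map L).retractClosure =
      ((w.le ⊓ w.ge).map L).retractClosure := by
  refine le_antisymm (fun X hX => ?_) (le_inf ?_ ?_)
  · simp only [Pi.inf_apply, inf_Prop_eq, retractClosure_map_iff] at hX
    obtain ⟨⟨Y, hY, i, r, hir⟩, ⟨Y', hY', i', r', hir'⟩⟩ := hX
    obtain ⟨H, hH, a, b, hab⟩ :=
      w.exists_localization_factorization_through_heart L hP hY hY' (r ≫ i')
    refine (retractClosure_map_iff _ L X).2 ⟨H, hH, i ≫ a, b ≫ r', ?_⟩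
    calc
      (i ≫ a) ≫ b ≫ r' = i ≫ (a ≫ b) ≫ r' := by simp only [Category.assoc]
      _ = (i ≫ r) ≫ i' ≫ r' := by simp only [hab, Category.assoc]
      _ = 𝟙 X := by rw [hir, hir', Category.comp_id]
  · exact monotone_retractClosure (map_monotone inf_le_left L)
  · exact monotone_retractClosure (map_monotone inf_le_right L)

end Development

/-- Theorem: the heart of the weight structure induced on the Verdier quotient `C/𝔻`
(whose classes are the retract-closures of `C_{w≤0}` and `C_{w≥0}`) is the
Karoubi-closure of the image of the heart of `w`: every object of the new heart is a
retract of an object coming from `C_{w=0}`, and every object of `C_{w=0}` lies in the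
new heart. -/
theorem statement18 {C : Type u} [Category.{v} C] [HasZeroObject C] [HasShift C ℤ]
    [Preadditive C] [∀ n : ℤ, (shiftFunctor C n).Additive] [Pretriangulated C]
    [IsTriangulated C] (w : WeightStructure C) (B : Set C) (hB : B ⊆ w.zeroOne) :
    (∀ X : (genSubcat B).trW.Localization,
      X ∈ {X | ∃ Y ∈ w.LE, ∃ (i : X ⟶ (genSubcat B).trW.Q.obj Y)
          (r : (genSubcat B).trW.Q.obj Y ⟶ X), i ≫ r = 𝟙 X} →
      X ∈ {X | ∃ Y ∈ w.GE, ∃ (i : X ⟶ (genSubcat B).trW.Q.obj Y)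
          (r : (genSubcat B).trW.Q.obj Y ⟶ X), i ≫ r = 𝟙 X} →
      ∃ Y ∈ w.heart, ∃ (i : X ⟶ (genSubcat B).trW.Q.obj Y)
        (r : (genSubcat B).trW.Q.obj Y ⟶ X), i ≫ r = 𝟙 X) ∧
    (∀ Y ∈ w.heart,
      (genSubcat B).trW.Q.obj Y ∈ {X | ∃ Y' ∈ w.LE, ∃ (i : X ⟶ (genSubcat B).trW.Q.obj Y')
          (r : (genSubcat B).trW.Q.obj Y' ⟶ X), i ≫ r = 𝟙 X} ∧
      (genSubcat B).trW.Q.obj Y ∈ {X | ∃ Y' ∈ w.GE, ∃ (i : X ⟶ (genSubcat B).trW.Q.obj Y')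
          (r : (genSubcat B).trW.Q.obj Y' ⟶ X), i ≫ r = 𝟙 X}) := by
  have key := statement18_general w (w.genSubcat_le_extensionProduct hB) (genSubcat B).trW.Q
  simp only [le_antisymm_iff, Pi.le_def, Pi.inf_apply, retractClosure_map_iff] at key
  exact ⟨fun X hX hX' => key.1 X ⟨hX, hX'⟩, fun Y hY => key.2 _ ⟨Y, hY, 𝟙 _, 𝟙 _, by simp⟩⟩
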